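/- Let K be a nonempty compact subset of a finite-dimensional real inner product space (e.g., ℝⁿ) and let r ≥ 0. If for every unit vector u there exists a point p ∈ K with ⟨p, u⟩ ≥ r, then the closed ball of radius r centered at the origin is contained in the convex hull of K. -/

import Mathlib

open Metric RealInnerProductSpace

/-!
If a point `x` of the ball were outside the closed convex hull of `K`, Hahn–Banach would give a
functional `f` with `f p < f x ≤ r * ‖f‖` for all `p ∈ K`, against the hypothesis in the direction
of the Riesz representative of `f`. In finite dimension the convex hull of a compact set is already
closed: by Carathéodory's theorem, convex combinations of boundedly many points suffice, so the hull
is a finite union of continuous images of compact sets.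
-/

section Caratheodory

variable {𝕜 E : Type*} [Field 𝕜] [LinearOrder 𝕜] [IsStrictOrderedRing 𝕜]
  [AddCommGroup E] [Module 𝕜 E] [FiniteDimensional 𝕜 E]

theorem convexHull_eq_biUnion_image_stdSimplex (s : Set E) :
    convexHull 𝕜 s = ⋃ n ∈ Set.Iic (Module.finrank 𝕜 E + 1),
      (fun p : (Fin n → 𝕜) × (Fin n → E) ↦ ∑ i, p.1 i • p.2 i) ''
        (stdSimplex 𝕜 (Fin n) ×ˢ Set.univ.pi fun _ ↦ s) := by
  apply Set.Subset.antisymm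
  · intro x hx
    obtain ⟨ι, _, z, w, hzs, hz, hw_pos, hw_sum, hwz⟩ := eq_pos_convex_span_of_mem_convexHull hx
    have hcard : Fintype.card ι ≤ Module.finrank 𝕜 E + 1 :=
      hz.card_le_finrank_succ.trans (Nat.add_le_add_right (Submodule.finrank_le _) 1)
    let e := (Fintype.equivFin ι).symm
    refine Set.mem_biUnion hcard ⟨(w ∘ e, z ∘ e), ⟨⟨fun i ↦ (hw_pos (e i)).le, ?_⟩, ?_⟩, ?_⟩
    · exact (e.sum_comp w).trans hw_sum
    · exact fun i _ ↦ hzs ⟨e i, rfl⟩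
    · exact (e.sum_comp fun j ↦ w j • z j).trans hwz
  · refine Set.iUnion₂_subset fun n _ ↦ ?_
    rintro _ ⟨⟨w, z⟩, ⟨⟨hw_nonneg, hw_sum⟩, hz⟩, rfl⟩
    exact mem_convexHull_of_exists_fintype w z hw_nonneg hw_sum (fun i ↦ hz i trivial) rfl

variable [TopologicalSpace 𝕜] [OrderClosedTopology 𝕜] [CompactIccSpace 𝕜] [ContinuousAdd 𝕜]
  [TopologicalSpace E] [ContinuousAdd E] [ContinuousSMul 𝕜 E] {K : Set E}

theorem isCompact_convexHull_of_isCompact (hK : IsCompact K) : IsCompact (convexHull 𝕜 K) := by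
  rw [convexHull_eq_biUnion_image_stdSimplex]
  refine (Set.finite_Iic _).isCompact_biUnion fun n _ ↦ IsCompact.image ?_ (by fun_prop)
  exact (isCompact_stdSimplex 𝕜 (Fin n)).prod (isCompact_univ_pi fun _ ↦ hK)

theorem closedConvexHull_eq_convexHull_of_isCompact [T2Space E] (hK : IsCompact K) :
    closedConvexHull 𝕜 K = convexHull 𝕜 K :=
  (closedConvexHull_min (subset_convexHull 𝕜 K) (convex_convexHull 𝕜 K)
    (isCompact_convexHull_of_isCompact hK).isClosed).antisymm convexHull_subset_closedConvexHull

end Caratheodory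

section Support

variable {E : Type*}

theorem exists_mul_norm_le_of_forall_norm_eq_one [SeminormedAddCommGroup E] [NormedSpace ℝ E]
    {K : Set E} {r : ℝ} (hne : K.Nonempty)
    (h : ∀ f : StrongDual ℝ E, ‖f‖ = 1 → ∃ p ∈ K, r ≤ f p) (f : StrongDual ℝ E) :
    ∃ p ∈ K, r * ‖f‖ ≤ f p := by
  obtain hf | hf := (norm_nonneg f).eq_or_lt'
  · obtain ⟨p, hp⟩ := hne
    have hfp : f p = 0 := by simpa only [hf, zero_mul, norm_le_zero_iff] using f.le_opNorm p
    exact ⟨p, hp, by rw [hf, mul_zero, hfp]⟩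
  · have hf_unit : ‖‖f‖⁻¹ • f‖ = 1 := by
      rw [norm_smul, norm_inv, norm_norm, inv_mul_cancel₀ hf.ne']
    obtain ⟨p, hp, hrp⟩ := h (‖f‖⁻¹ • f) hf_unit
    refine ⟨p, hp, ?_⟩
    rwa [smul_apply, smul_eq_mul, le_inv_mul_iff₀' hf] at hrp

theorem closedBall_subset_closedConvexHull_of_forall_dual
    [SeminormedAddCommGroup E] [NormedSpace ℝ E] {K : Set E} {c : E} {r : ℝ}
    (h : ∀ f : StrongDual ℝ E, ∃ p ∈ K, f c + r * ‖f‖ ≤ f p) :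
    closedBall c r ⊆ closedConvexHull ℝ K := by
  intro x hx
  by_contra hxK
  obtain ⟨f, a, hfa, hax⟩ :=
    geometric_hahn_banach_closed_point convex_closedConvexHull isClosed_closedConvexHull hxK
  obtain ⟨p, hp, hfp⟩ := h f
  have hfx : f x ≤ f c + r * ‖f‖ := by
    have hfxc : f (x - c) ≤ ‖f‖ * r :=
      (Real.le_norm_self _).trans (f.le_opNorm_of_le (mem_closedBall_iff_norm.1 hx))
    rw [map_sub] at hfxc
    linarith
  have hpx : f p < f x := (hfa p (subset_closedConvexHull hp)).trans hax
  exact hpx.not_ge (hfx.trans hfp)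

theorem closedBall_subset_convexHull_of_support_general [NormedAddCommGroup E]
    [InnerProductSpace ℝ E] [CompleteSpace E] {K : Set E} (hne : K.Nonempty) {r : ℝ}
    (h : ∀ u : E, ‖u‖ = 1 → ∃ p ∈ K, r ≤ ⟪p, u⟫) :
    closedBall (0 : E) r ⊆ closedConvexHull ℝ K := by
  have h_dual : ∀ f : StrongDual ℝ E, ‖f‖ = 1 → ∃ p ∈ K, r ≤ f p := by
    intro f hf
    obtain ⟨u, rfl⟩ := (InnerProductSpace.toDual ℝ E).surjective f
    rw [LinearIsometryEquiv.norm_map] at hf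
    simpa only [InnerProductSpace.toDual_apply_apply, real_inner_comm] using h u hf
  refine closedBall_subset_closedConvexHull_of_forall_dual fun f ↦ ?_
  simpa only [map_zero, zero_add] using exists_mul_norm_le_of_forall_norm_eq_one hne h_dual f

end Support

/-- If `K` is a nonempty compact subset of a finite-dimensional real inner product space and
every unit vector `u` admits a point `p ∈ K` with `⟪p, u⟫ ≥ r` (where `r ≥ 0`), then the
closed ball of radius `r` about the origin is contained in the convex hull of `K`. -/
theorem closedBall_subset_convexHull_of_support
    {E : Type*} [NormedAddCommGroup E] [InnerProductSpace ℝ E] [FiniteDimensional ℝ E]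
    (K : Set E) (hne : K.Nonempty) (hK : IsCompact K) (r : ℝ) (hr : 0 ≤ r)
    (h : ∀ u : E, ‖u‖ = 1 → ∃ p ∈ K, r ≤ ⟪p, u⟫) :
    closedBall (0 : E) r ⊆ convexHull ℝ K := by
  have := FiniteDimensional.complete ℝ E
  rw [← closedConvexHull_eq_convexHull_of_isCompact hK]
  exact closedBall_subset_convexHull_of_support_general hne h
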